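/- arXiv:2409.03594 — 6 statements merged into one kernel-verified Lean document; each statement's English description precedes it below -/
import Mathlib

section
/- In every goods instance, every orientation is an EFX^+ allocation. In particular, for any goods instance an EFX^+ orientation (and hence an EFX^+ allocation) always exists. -/
open Finset

variable {V : Type*} [DecidableEq V]

/-- `e` has strictly positive marginal value (is a *good*) for the valuation `v`
relative to the item set `M`. -/
def IsGoodFor (v : Finset (Sym2 V) → ℝ) (M : Finset (Sym2 V)) (e : Sym2 V) : Prop :=
  ∀ S ⊆ M.erase e, v S < v (insert e S)

/-- `e` has strictly negative marginal value (is a *chore*) for the valuation `v`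
relative to the item set `M`. -/
def IsChoreFor (v : Finset (Sym2 V) → ℝ) (M : Finset (Sym2 V)) (e : Sym2 V) : Prop :=
  ∀ S ⊆ M.erase e, v (insert e S) < v S

/-- `e` has zero marginal value (is a *dummy*) for the valuation `v`
relative to the item set `M`. -/
def IsDummyFor (v : Finset (Sym2 V) → ℝ) (M : Finset (Sym2 V)) (e : Sym2 V) : Prop :=
  ∀ S ⊆ M.erase e, v (insert e S) = v S

/-- A valid instance on a simple graph: the edge set `M` consists of non-loop edges,
every edge is (for every agent) a good, a chore, or a dummy, and every edge not
incident to an agent is a dummy for that agent. -/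
def ValidInstance (M : Finset (Sym2 V)) (v : V → Finset (Sym2 V) → ℝ) : Prop :=
  (∀ e ∈ M, ¬ e.IsDiag) ∧
  (∀ (i : V), ∀ e ∈ M, IsGoodFor (v i) M e ∨ IsChoreFor (v i) M e ∨ IsDummyFor (v i) M e) ∧
  (∀ (i : V), ∀ e ∈ M, i ∉ e → IsDummyFor (v i) M e)

/-- `X` is a (complete) allocation of the items in `M`: bundles are contained in `M`
and every item belongs to exactly one bundle. -/
def IsAllocation (M : Finset (Sym2 V)) (X : V → Finset (Sym2 V)) : Prop :=
  (∀ i, X i ⊆ M) ∧ ∀ e ∈ M, ∃! i, e ∈ X i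

/-- Every allocated edge goes to one of its endpoint agents. -/
def IsOrientation (X : V → Finset (Sym2 V)) : Prop :=
  ∀ i, ∀ e ∈ X i, i ∈ e

/-- Agent `i` envies agent `j`. -/
def Envies (v : V → Finset (Sym2 V) → ℝ) (X : V → Finset (Sym2 V)) (i j : V) : Prop :=
  v i (X i) < v i (X j)

/-- EFX condition on the envied bundle, removing an item whose removal *strictly*
decreases the value (superscript `+`). -/
def CondEnviedStrict (v : V → Finset (Sym2 V) → ℝ) (X : V → Finset (Sym2 V)) : Prop :=
  ∀ i j, Envies v X i j → ∀ e ∈ X j,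
    v i ((X j).erase e) < v i (X j) → v i ((X j).erase e) ≤ v i (X i)

/-- EFX condition on the envied bundle, removing an item whose removal weakly
decreases the value (superscript `0`). -/
def CondEnviedWeak (v : V → Finset (Sym2 V) → ℝ) (X : V → Finset (Sym2 V)) : Prop :=
  ∀ i j, Envies v X i j → ∀ e ∈ X j,
    v i ((X j).erase e) ≤ v i (X j) → v i ((X j).erase e) ≤ v i (X i)

/-- EFX condition on the envious agent's own bundle, removing an item whose removal
*strictly* increases the value (subscript `-`). -/
def CondOwnStrict (v : V → Finset (Sym2 V) → ℝ) (X : V → Finset (Sym2 V)) : Prop :=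
  ∀ i j, Envies v X i j → ∀ e ∈ X i,
    v i (X i) < v i ((X i).erase e) → v i (X j) ≤ v i ((X i).erase e)

/-- EFX condition on the envious agent's own bundle, removing an item whose removal
weakly increases the value (subscript `0`). -/
def CondOwnWeak (v : V → Finset (Sym2 V) → ℝ) (X : V → Finset (Sym2 V)) : Prop :=
  ∀ i j, Envies v X i j → ∀ e ∈ X i,
    v i (X i) ≤ v i ((X i).erase e) → v i (X j) ≤ v i ((X i).erase e)

/-- EFX⁺ for goods instances: only the condition on the envied bundle. -/
def EFXplusGoods (v : V → Finset (Sym2 V) → ℝ) (X : V → Finset (Sym2 V)) : Prop :=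
  CondEnviedStrict v X

/-! Two distinct agents `i ≠ j` have at most one edge in common. If `j`'s bundle in an orientation
contains an edge `e` that `i` does not regard as a dummy, then `e` is that common edge, and what `j`
keeps once `e` is removed has for `i` the value of the empty bundle, hence at most that of `i`'s own
bundle. -/

theorem le_of_forall_erase_le {α β : Type*} [DecidableEq α] [Preorder β] {f : Finset α → β}
    {S T : Finset α} (hST : S ⊆ T) (h : ∀ U ⊆ T, ∀ e ∈ U \ S, f (U.erase e) ≤ f U) :
    f S ≤ f T := by
  induction T using Finset.strongInduction with
  | H T ih =>
    obtain rfl | hlt := hST.eq_or_ssubset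
    · exact le_rfl
    obtain ⟨e, heT, heS⟩ := exists_of_ssubset hlt
    have hsub : T.erase e ⊂ T := erase_ssubset heT
    calc f S ≤ f (T.erase e) :=
          ih _ hsub (subset_erase.2 ⟨hST, heS⟩) fun U hU => h U (hU.trans hsub.subset)
      _ ≤ f T := h T Subset.rfl e (mem_sdiff.2 ⟨heT, heS⟩)

section Valuation

variable {v : Finset (Sym2 V) → ℝ} {M S T : Finset (Sym2 V)} {e : Sym2 V}

theorem IsGoodFor.erase_lt (h : IsGoodFor v M e) (hS : S ⊆ M) (he : e ∈ S) :
    v (S.erase e) < v S := by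
  simpa only [insert_erase he] using h (S.erase e) (erase_subset_erase e hS)

theorem IsDummyFor.erase_eq (h : IsDummyFor v M e) (hS : S ⊆ M) (he : e ∈ S) :
    v (S.erase e) = v S := by
  simpa only [insert_erase he] using (h (S.erase e) (erase_subset_erase e hS)).symm

theorem value_le_of_good_or_dummy (hST : S ⊆ T) (hT : T ⊆ M)
    (h : ∀ e ∈ T \ S, IsGoodFor v M e ∨ IsDummyFor v M e) : v S ≤ v T := by
  refine le_of_forall_erase_le hST fun U hU e he => ?_
  have heU : e ∈ U := (mem_sdiff.1 he).1
  rcases h e (sdiff_subset_sdiff hU Subset.rfl he) with hgood | hdummy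
  · exact (hgood.erase_lt (hU.trans hT) heU).le
  · exact (hdummy.erase_eq (hU.trans hT) heU).le

theorem value_eq_of_dummy (hST : S ⊆ T) (hT : T ⊆ M) (h : ∀ e ∈ T \ S, IsDummyFor v M e) :
    v S = v T := by
  have herase : ∀ U ⊆ T, ∀ e ∈ U \ S, v (U.erase e) = v U := fun U hU e he =>
    (h e (sdiff_subset_sdiff hU Subset.rfl he)).erase_eq (hU.trans hT) (mem_sdiff.1 he).1
  exact le_antisymm
    (le_of_forall_erase_le hST fun U hU e he => (herase U hU e he).le)
    (le_of_forall_erase_le (β := ℝᵒᵈ) hST fun U hU e he => (herase U hU e he).ge)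

end Valuation

section Orientation

variable {M : Finset (Sym2 V)} {v : V → Finset (Sym2 V) → ℝ} {X : V → Finset (Sym2 V)}

theorem IsOrientation.eq_of_mem {W : Type*} {X : W → Finset (Sym2 W)} {i j : W} {e f : Sym2 W}
    (hX : IsOrientation X) (hij : i ≠ j) (he : e ∈ X j) (hie : i ∈ e) (hf : f ∈ X j) (hif : i ∈ f) :
    e = f :=
  Sym2.eq_of_ne_mem hij hie (hX j e he) hif (hX j f hf)

theorem IsOrientation.value_erase_eq_value_empty {i j : V} {e : Sym2 V} (hX : IsOrientation X)
    (hXM : X j ⊆ M) (hdummy : ∀ f ∈ M, i ∉ f → IsDummyFor (v i) M f) (hij : i ≠ j)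
    (he : e ∈ X j) (hie : i ∈ e) : v i ((X j).erase e) = v i ∅ := by
  have hsub : (X j).erase e ⊆ M := (erase_subset _ _).trans hXM
  refine (value_eq_of_dummy (empty_subset _) hsub fun f hf => ?_).symm
  rw [sdiff_empty] at hf
  obtain ⟨hfe, hfX⟩ := mem_erase.1 hf
  exact hdummy f (hsub hf) fun hif => hfe (hX.eq_of_mem hij hfX hif he hie)

theorem IsOrientation.efxplusGoods (hX : IsOrientation X) (hXM : ∀ i, X i ⊆ M)
    (hdummy : ∀ i, ∀ e ∈ M, i ∉ e → IsDummyFor (v i) M e)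
    (hempty : ∀ i, v i ∅ ≤ v i (X i)) : EFXplusGoods v X := by
  intro i j henvy e he hlt
  have hij : i ≠ j := ne_of_apply_ne (fun k => v i (X k)) henvy.ne
  have hie : i ∈ e := by
    by_contra hie
    exact hlt.ne ((hdummy i e (hXM j he) hie).erase_eq (hXM j) he)
  calc v i ((X j).erase e) = v i ∅ :=
        hX.value_erase_eq_value_empty (hXM j) (hdummy i) hij he hie
    _ ≤ v i (X i) := hempty i

theorem isAllocation_filter_eq (M : Finset (Sym2 V)) (s : Sym2 V → V) :
    IsAllocation M fun i => {e ∈ M | s e = i} := by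
  refine ⟨fun i => filter_subset _ _, fun e he => ⟨s e, mem_filter.2 ⟨he, rfl⟩, fun i hi => ?_⟩⟩
  exact (mem_filter.1 hi).2.symm

theorem isOrientation_filter_eq {s : Sym2 V → V} (hs : ∀ e ∈ M, s e ∈ e) :
    IsOrientation fun i => {e ∈ M | s e = i} := by
  intro i e he
  obtain ⟨heM, rfl⟩ := mem_filter.1 he
  exact hs e heM

theorem exists_isAllocation_isOrientation {W : Type*} (M : Finset (Sym2 W)) :
    ∃ X, IsAllocation M X ∧ IsOrientation X := by
  classical
  exact ⟨_, isAllocation_filter_eq M fun e => e.out.1,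
    isOrientation_filter_eq fun e _ => Sym2.out_fst_mem e⟩

end Orientation

theorem stmt0_general {V : Type*} [DecidableEq V]
    (M : Finset (Sym2 V)) (v : V → Finset (Sym2 V) → ℝ)
    (hdummy : ∀ (i : V), ∀ e ∈ M, i ∉ e → IsDummyFor (v i) M e)
    (hempty : ∀ (i : V), ∀ S ⊆ M, v i ∅ ≤ v i S) :
    (∀ X : V → Finset (Sym2 V),
        IsAllocation M X → IsOrientation X → EFXplusGoods v X) ∧
    (∃ X : V → Finset (Sym2 V),
        IsAllocation M X ∧ IsOrientation X ∧ EFXplusGoods v X) := by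
  have hefx : ∀ X, IsAllocation M X → IsOrientation X → EFXplusGoods v X := fun X hA hO =>
    hO.efxplusGoods hA.1 hdummy fun i => hempty i (X i) (hA.1 i)
  obtain ⟨X, hA, hO⟩ := exists_isAllocation_isOrientation M
  exact ⟨hefx, X, hA, hO, hefx X hA hO⟩

/-- In every goods instance, every orientation is an EFX⁺ allocation;
in particular an EFX⁺ orientation (hence an EFX⁺ allocation) always exists. -/
theorem stmt0 {V : Type*} [DecidableEq V]
    (M : Finset (Sym2 V)) (v : V → Finset (Sym2 V) → ℝ)
    (hvalid : ValidInstance M v)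
    (hgoods : ∀ (i : V), ∀ e ∈ M, IsGoodFor (v i) M e ∨ IsDummyFor (v i) M e) :
    (∀ X : V → Finset (Sym2 V),
        IsAllocation M X → IsOrientation X → EFXplusGoods v X) ∧
    (∃ X : V → Finset (Sym2 V),
        IsAllocation M X ∧ IsOrientation X ∧ EFXplusGoods v X) :=
  stmt0_general M v hvalid.2.2 fun i S hS =>
    value_le_of_good_or_dummy (empty_subset S) hS fun e he => hgoods i e (hS (mem_sdiff.1 he).1)
end

section
/- Let G = (N, M) be a connected simple graph with strictly more edges than vertices, in an instance where every edge is a chore for both of its endpoint agents. Then no orientation of G is EFX^+_-; consequently no orientation satisfies any of the four notions EFX^0_0, EFX^0_-, EFX^+_0, EFX^+_- (each of which implies EFX^+_-), and no orientation is EFX_- or EFX_0. -/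
open Finset

variable {V : Type*} [DecidableEq V]

/-!
In an orientation, an agent `i` holding an edge `s(i, j)` with `j ≠ i` gives the bundle of `j` the
value of the empty bundle, because no other edge is incident to both agents. If `i` also holds a
second chore, then `i` still envies `j` after dropping `s(i, j)`. So the EFX condition on
the own bundle leaves every agent with at most one edge, and a set of agents cannot absorb more
edges than it has members.
-/

section

variable {w : Finset (Sym2 V) → ℝ} {v : V → Finset (Sym2 V) → ℝ} {X : V → Finset (Sym2 V)}
  {M S T : Finset (Sym2 V)} {e : Sym2 V} {i j : V}

theorem IsDummyFor.apply_erase (he : IsDummyFor w M e) (hSM : S ⊆ M) (heS : e ∈ S) :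
    w (S.erase e) = w S := by
  simpa only [insert_erase heS] using (he _ (erase_subset_erase e hSM)).symm

theorem IsChoreFor.lt_apply_erase (he : IsChoreFor w M e) (hSM : S ⊆ M) (heS : e ∈ S) :
    w S < w (S.erase e) := by
  simpa only [insert_erase heS] using he _ (erase_subset_erase e hSM)

theorem apply_eq_of_subset_of_isDummyFor (hTS : T ⊆ S) (hSM : S ⊆ M)
    (hdummy : ∀ e ∈ S, e ∉ T → IsDummyFor w M e) : w S = w T := by
  induction S using Finset.strongInduction with
  | H S ih =>
    obtain rfl | hssub := hTS.eq_or_ssubset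
    · rfl
    obtain ⟨e, heS, heT⟩ := exists_of_ssubset hssub
    calc
      w S = w (S.erase e) := ((hdummy e heS heT).apply_erase hSM heS).symm
      _ = w T := ih _ (erase_ssubset heS) (subset_erase.2 ⟨hTS, heT⟩)
        ((erase_subset e S).trans hSM) fun d hd => hdummy d (mem_of_mem_erase hd)

theorem apply_lt_of_ssubset_of_isChoreFor (hTS : T ⊂ S) (hSM : S ⊆ M)
    (hchore : ∀ e ∈ S, e ∉ T → IsChoreFor w M e) : w S < w T := by
  induction S using Finset.strongInduction with
  | H S ih =>
    obtain ⟨e, heS, heT⟩ := exists_of_ssubset hTS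
    have hlt : w S < w (S.erase e) := (hchore e heS heT).lt_apply_erase hSM heS
    obtain rfl | hssub := (subset_erase.2 ⟨hTS.subset, heT⟩).eq_or_ssubset
    · exact hlt
    · exact hlt.trans <| ih _ (erase_ssubset heS) hssub ((erase_subset e S).trans hSM)
        fun d hd => hchore d (mem_of_mem_erase hd)

omit [DecidableEq V] in
theorem IsAllocation.eq_of_mem_of_mem (hX : IsAllocation M X) (hi : e ∈ X i) (hj : e ∈ X j) :
    i = j :=
  (hX.2 e (hX.1 i hi)).unique hi hj

omit [DecidableEq V] in
theorem IsOrientation.notMem_of_mem_bundle (hO : IsOrientation X) (hX : IsAllocation M X)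
    (hij : i ≠ j) (hedge : s(i, j) ∈ X i) (he : e ∈ X j) : i ∉ e := by
  intro hie
  obtain rfl : e = s(i, j) := (Sym2.mem_and_mem_iff hij).1 ⟨hie, hO j e he⟩
  exact hij (hX.eq_of_mem_of_mem hedge he)

theorem IsOrientation.apply_bundle_eq_apply_empty (hO : IsOrientation X) (hX : IsAllocation M X)
    (hdummy : ∀ e ∈ M, i ∉ e → IsDummyFor w M e) (hij : i ≠ j) (hedge : s(i, j) ∈ X i) :
    w (X j) = w ∅ :=
  apply_eq_of_subset_of_isDummyFor (empty_subset _) (hX.1 j) fun e he _ =>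
    hdummy e (hX.1 j he) (hO.notMem_of_mem_bundle hX hij hedge he)

theorem IsOrientation.card_inter_sym2_le (hO : IsOrientation X) (hX : IsAllocation M X)
    {A : Finset V} {n : ℕ} (hcard : ∀ i ∈ A, #(X i) ≤ n) : #(M ∩ A.sym2) ≤ #A * n := by
  have hcover : M ∩ A.sym2 ⊆ A.biUnion X := by
    intro e he
    obtain ⟨heM, heA⟩ := mem_inter.1 he
    obtain ⟨i, hi⟩ := (hX.2 e heM).exists
    exact mem_biUnion.2 ⟨i, mem_sym2_iff.1 heA i (hO i e hi), hi⟩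
  exact (card_le_card hcover).trans (card_biUnion_le_card_mul A X n hcard)

theorem CondOwnWeak.condOwnStrict (h : CondOwnWeak v X) : CondOwnStrict v X :=
  fun i j hij e he hlt => h i j hij e he hlt.le

theorem CondOwnStrict.card_bundle_le_one (h : CondOwnStrict v X) (hX : IsAllocation M X)
    (hO : IsOrientation X) (hdummy : ∀ e ∈ M, i ∉ e → IsDummyFor (v i) M e)
    (hchore : ∀ e ∈ M, i ∈ e → IsChoreFor (v i) M e) : #(X i) ≤ 1 := by
  by_contra! hcard
  obtain ⟨e, he, hne⟩ := exists_mem_ne hcard s(i, i)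
  obtain ⟨j, rfl⟩ := hO i e he
  have hij : i ≠ j := by
    rintro rfl
    exact hne rfl
  have hbundle : ∀ d ∈ X i, IsChoreFor (v i) M d := fun d hd =>
    hchore d (hX.1 i hd) (hO i d hd)
  have hj : v i (X j) = v i ∅ := hO.apply_bundle_eq_apply_empty hX hdummy hij he
  have herase : v i (X i) < v i ((X i).erase s(i, j)) := (hbundle _ he).lt_apply_erase (hX.1 i) he
  have hrest : v i ((X i).erase s(i, j)) < v i ∅ :=
    apply_lt_of_ssubset_of_isChoreFor
      (empty_ssubset.2 <| (one_lt_card_iff_nontrivial.1 hcard).erase_nonempty)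
      ((erase_subset _ _).trans (hX.1 i)) fun d hd _ => hbundle d (mem_of_mem_erase hd)
  have henvy : Envies v X i j := (herase.trans hrest).trans_eq hj.symm
  exact ((h i j henvy _ he herase).trans_lt hrest).ne hj

theorem not_condOwnStrict_of_card_lt (hX : IsAllocation M X) (hO : IsOrientation X)
    (hdummy : ∀ i, ∀ e ∈ M, i ∉ e → IsDummyFor (v i) M e)
    (hchore : ∀ e ∈ M, ∀ i ∈ e, IsChoreFor (v i) M e)
    {A : Finset V} (hcard : #A < #(M ∩ A.sym2)) : ¬ CondOwnStrict v X := fun h =>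
  hcard.not_ge <| by
    simpa only [mul_one] using hO.card_inter_sym2_le hX (n := 1) fun i _ =>
      h.card_bundle_le_one hX hO (hdummy i) fun e he => hchore e he i

theorem stmt2_general {A : Finset V} (hcard : #A < #(M ∩ A.sym2))
    (hdummy : ∀ i, ∀ e ∈ M, i ∉ e → IsDummyFor (v i) M e)
    (hchore : ∀ e ∈ M, ∀ i ∈ e, IsChoreFor (v i) M e)
    (hX : IsAllocation M X) (hO : IsOrientation X) :
    ¬ (CondEnviedStrict v X ∧ CondOwnStrict v X) ∧
    ¬ (CondEnviedWeak v X ∧ CondOwnWeak v X) ∧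
    ¬ (CondEnviedWeak v X ∧ CondOwnStrict v X) ∧
    ¬ (CondEnviedStrict v X ∧ CondOwnWeak v X) ∧
    ¬ CondOwnStrict v X ∧
    ¬ CondOwnWeak v X := by
  have hstrict : ¬ CondOwnStrict v X := not_condOwnStrict_of_card_lt hX hO hdummy hchore hcard
  have hweak : ¬ CondOwnWeak v X := fun h => hstrict h.condOwnStrict
  exact ⟨fun h => hstrict h.2, fun h => hweak h.2, fun h => hstrict h.2, fun h => hweak h.2,
    hstrict, hweak⟩

end

/-- On a connected simple graph with strictly more edges than
vertices, in an instance where every edge is a chore for both of its endpoints,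
no orientation is EFX⁺₋; consequently no orientation satisfies EFX⁰₀, EFX⁰₋,
EFX⁺₀ or EFX⁺₋, and no orientation is EFX₋ or EFX₀. -/
theorem stmt2 {V : Type*} [Fintype V] [DecidableEq V]
    (G : SimpleGraph V) [DecidableRel G.Adj]
    (hconn : G.Connected)
    (hcount : Fintype.card V < G.edgeFinset.card)
    (v : V → Finset (Sym2 V) → ℝ)
    (hvalid : ValidInstance G.edgeFinset v)
    (hchore : ∀ e ∈ G.edgeFinset, ∀ i ∈ e, IsChoreFor (v i) G.edgeFinset e) :
    ∀ X : V → Finset (Sym2 V),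
      IsAllocation G.edgeFinset X → IsOrientation X →
        ¬ (CondEnviedStrict v X ∧ CondOwnStrict v X) ∧
        ¬ (CondEnviedWeak v X ∧ CondOwnWeak v X) ∧
        ¬ (CondEnviedWeak v X ∧ CondOwnStrict v X) ∧
        ¬ (CondEnviedStrict v X ∧ CondOwnWeak v X) ∧
        ¬ CondOwnStrict v X ∧
        ¬ CondOwnWeak v X := fun _ =>
  stmt2_general (A := univ) (by rwa [sym2_univ, inter_univ, card_univ]) hvalid.2.2 hchore
end

section
/- Consider a chores instance on a simple graph G = (N, M) in which every edge is a chore for both of its endpoint agents. Then an EFX_- orientation of G exists if and only if every connected component of G has at most as many edges as vertices. -/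
open Finset

variable {V : Type*} [DecidableEq V]

/-!
An EFX₋ orientation is the same thing as an orientation giving every agent at most one edge. If
`i` holds two edges, one of them joining `i` to `j`, then nothing in the bundle of `j` matters to
`i`, so `i` still prefers that bundle after discarding the first edge; conversely, an agent who
discards the only edge she holds is left with the empty bundle, which no bundle of chores beats.

Such orientations are handled by Hall's theorem. In a component with at most as many edges as
vertices, let `W` be a nonempty set of vertices. The edges from the vertices outside `W` to their
parents, in a breadth-first tree rooted in `W`, are distinct and do not lie inside `W`, which leaves
at most `|W|` edges inside `W`.
-/

section DistinctEndpoints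

variable {α : Type*} {E : Set (Sym2 α)}

/-- The edges in `E` have *distinct endpoint representatives*: one can select an endpoint of each
edge so that no vertex is selected twice. Equivalently, `E` can be oriented with all indegrees at
most one. -/
def HasDistinctEndpoints (E : Set (Sym2 α)) : Prop :=
  ∃ f : E → α, Function.Injective f ∧ ∀ e : E, f e ∈ (e : Sym2 α)

lemma HasDistinctEndpoints.mono {E' : Set (Sym2 α)} (hE : HasDistinctEndpoints E) (h : E' ⊆ E) :
    HasDistinctEndpoints E' := by
  obtain ⟨f, f_inj, hf⟩ := hE
  exact ⟨f ∘ Set.inclusion h, f_inj.comp (Set.inclusion_injective h), fun _ => hf _⟩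

lemma HasDistinctEndpoints.of_rel (r : Sym2 α → α → Prop) (hr : ∀ e ∈ E, ∃ i ∈ e, r e i)
    (r_inj : ∀ i, ∀ e ∈ E, ∀ e' ∈ E, r e i → r e' i → e = e') : HasDistinctEndpoints E := by
  choose f hf using fun e : E => hr e e.2
  refine ⟨f, fun e e' hee' => Subtype.ext ?_, fun e => (hf e).1⟩
  exact r_inj (f e) e e.2 e' e'.2 (hf e).2 (hee' ▸ (hf e').2)

lemma HasDistinctEndpoints.ncard_le (hE : HasDistinctEndpoints E) {s : Set α} (hs : s.Finite)
    (hEs : ∀ e ∈ E, ∀ x ∈ e, x ∈ s) : E.ncard ≤ s.ncard := by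
  obtain ⟨f, f_inj, hf⟩ := hE
  have := hs.to_subtype
  let g : E → s := fun e => ⟨f e, hEs e e.2 _ (hf e)⟩
  exact Nat.card_le_card_of_injective g fun e e' h => f_inj (congrArg Subtype.val h)

lemma hasDistinctEndpoints_of_forall_ncard_le (hE : E.Finite)
    (h : ∀ W : Finset α, (E ∩ (W : Set α).sym2).ncard ≤ #W) :
    HasDistinctEndpoints E := by
  classical
  have hall : ∀ s : Finset E, #s ≤ #(s.biUnion fun e => (e : Sym2 α).toFinset) := by
    intro s
    set W := s.biUnion fun e => (e : Sym2 α).toFinset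
    have hsW : Subtype.val '' (s : Set E) ⊆ E ∩ (W : Set α).sym2 := by
      rintro _ ⟨e, he, rfl⟩
      have heW : ∀ x ∈ (e : Sym2 α), x ∈ W := fun x hx =>
        mem_biUnion.2 ⟨e, he, Sym2.mem_toFinset.2 hx⟩
      exact ⟨e.2, Set.mem_sym2_iff_subset.2 heW⟩
    calc #s = (Subtype.val '' (s : Set E)).ncard := by
          rw [Set.ncard_image_of_injective _ Subtype.val_injective, Set.ncard_coe_finset]
      _ ≤ (E ∩ (W : Set α).sym2).ncard := Set.ncard_le_ncard hsW (hE.inter_of_left _)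
      _ ≤ #W := h W
  obtain ⟨f, f_inj, hf⟩ := (all_card_le_biUnion_card_iff_exists_injective _).1 hall
  exact ⟨f, f_inj, fun e => Sym2.mem_toFinset.1 (hf e)⟩

end DistinctEndpoints

section Components

variable {α : Type*} {G : SimpleGraph α}

/-- The edges of a connected component: the edges of `G` with both endpoints in it. It is spelled
out as in `stmt3`. -/
def componentEdgeSet (c : G.ConnectedComponent) : Set (Sym2 α) :=
  {e | e ∈ G.edgeSet ∧ ∀ x ∈ e, G.connectedComponentMk x = c}

lemma componentEdgeSet_subset (c : G.ConnectedComponent) : componentEdgeSet c ⊆ G.edgeSet :=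
  fun _ he => he.1

lemma mk_mem_componentEdgeSet {c : G.ConnectedComponent} {u w : α} (h : G.Adj u w)
    (hu : u ∈ c.supp) : s(u, w) ∈ componentEdgeSet c :=
  ⟨h, Sym2.forall_mem_pair.2 ⟨hu, c.mem_supp_of_adj_mem_supp hu h⟩⟩

lemma exists_mem_componentEdgeSet {e : Sym2 α} (he : e ∈ G.edgeSet) :
    ∃ c : G.ConnectedComponent, e ∈ componentEdgeSet c := by
  induction e with
  | _ u w => exact ⟨G.connectedComponentMk u, mk_mem_componentEdgeSet he rfl⟩

lemma exists_adj_dist_lt_dist {u r : α} (h : G.Reachable u r) (hne : u ≠ r) :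
    ∃ p, G.Adj u p ∧ G.dist p r < G.dist u r := by
  obtain ⟨w, hw⟩ := h.exists_walk_length_eq_dist
  cases w with
  | nil => exact absurd rfl hne
  | cons hadj q => exact ⟨_, hadj, hw ▸ Nat.lt_succ_of_le (SimpleGraph.dist_le q)⟩

lemma injOn_mk_of_lt {β : Type*} [Preorder β] {s : Set α} {p : α → α} {d : α → β}
    (h : ∀ u ∈ s, d (p u) < d u) : Set.InjOn (fun u => s(u, p u)) s := by
  intro u hu w hw huw
  obtain ⟨huw, -⟩ | ⟨hup, hpw⟩ := Sym2.eq_iff.1 huw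
  · exact huw
  · have hlt := h u hu
    rw [hpw, hup] at hlt
    exact absurd hlt (h w hw).asymm

lemma exists_injOn_parentEdge {c : G.ConnectedComponent} {r : α} (hr : r ∈ c.supp) :
    ∃ g : α → Sym2 α, Set.MapsTo g (c.supp \ {r}) (componentEdgeSet c) ∧
      Set.InjOn g (c.supp \ {r}) ∧ ∀ u, u ∈ g u := by
  have : Nonempty α := ⟨r⟩
  have hpar : ∀ u ∈ c.supp \ {r}, ∃ p, G.Adj u p ∧ G.dist p r < G.dist u r := fun u hu =>
    exists_adj_dist_lt_dist (c.reachable_of_mem_supp hu.1 hr) hu.2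
  choose! p hadj hlt using hpar
  exact ⟨fun u => s(u, p u), fun u hu => mk_mem_componentEdgeSet (hadj u hu) hu.1,
    injOn_mk_of_lt (d := (G.dist · r)) hlt, fun u => Sym2.mem_mk_left u _⟩

lemma finite_supp_of_finite_componentEdgeSet {c : G.ConnectedComponent}
    (hc : (componentEdgeSet c).Finite) : c.supp.Finite := by
  obtain ⟨r, hr⟩ := c.nonempty_supp
  obtain ⟨g, g_maps, g_inj, -⟩ := exists_injOn_parentEdge hr
  exact (Set.Finite.of_injOn g_maps g_inj hc).of_sdiff (Set.finite_singleton r)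

lemma ncard_supp_sdiff_le {c : G.ConnectedComponent} (hc : (componentEdgeSet c).Finite)
    {W : Set α} (hW : (c.supp ∩ W).Nonempty) :
    (c.supp \ W).ncard ≤ (componentEdgeSet c \ W.sym2).ncard := by
  obtain ⟨r, hrc, hrW⟩ := hW
  obtain ⟨g, g_maps, g_inj, hg⟩ := exists_injOn_parentEdge hrc
  have hsub : c.supp \ W ⊆ c.supp \ {r} :=
    Set.sdiff_subset_sdiff_right (Set.singleton_subset_iff.2 hrW)
  refine Set.ncard_le_ncard_of_injOn g (fun u hu => ⟨g_maps (hsub hu), fun hgu => ?_⟩)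
    (g_inj.mono hsub) (hc.subset Set.sdiff_subset)
  exact hu.2 (Set.mem_sym2_iff_subset.1 hgu (hg u))

lemma ncard_componentEdgeSet_inter_sym2_le {c : G.ConnectedComponent}
    (hc : (componentEdgeSet c).Finite) (hle : (componentEdgeSet c).ncard ≤ c.supp.ncard)
    {W : Set α} (hW : (c.supp ∩ W).Nonempty) :
    (componentEdgeSet c ∩ W.sym2).ncard ≤ (c.supp ∩ W).ncard := by
  have hout := ncard_supp_sdiff_le hc hW
  have hedges := Set.ncard_inter_add_ncard_sdiff_eq_ncard (componentEdgeSet c) W.sym2 hc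
  have hverts := Set.ncard_inter_add_ncard_sdiff_eq_ncard c.supp W
    (finite_supp_of_finite_componentEdgeSet hc)
  lia

lemma hasDistinctEndpoints_componentEdgeSet {c : G.ConnectedComponent}
    (hc : (componentEdgeSet c).Finite) (hle : (componentEdgeSet c).ncard ≤ c.supp.ncard) :
    HasDistinctEndpoints (componentEdgeSet c) := by
  refine hasDistinctEndpoints_of_forall_ncard_le hc fun W => ?_
  obtain hW | hW := (c.supp ∩ W).eq_empty_or_nonempty
  · have hnone : componentEdgeSet c ∩ (W : Set α).sym2 = ∅ := by
      refine Set.eq_empty_of_forall_notMem fun e he => ?_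
      have hx := Sym2.out_fst_mem e
      exact hW.subset ⟨he.1.2 _ hx, Set.mem_sym2_iff_subset.1 he.2 hx⟩
    simp [hnone]
  · calc (componentEdgeSet c ∩ (W : Set α).sym2).ncard
        ≤ (c.supp ∩ W).ncard := ncard_componentEdgeSet_inter_sym2_le hc hle hW
      _ ≤ (W : Set α).ncard := Set.ncard_le_ncard Set.inter_subset_right
      _ = #W := Set.ncard_coe_finset W

lemma hasDistinctEndpoints_edgeSet
    (h : ∀ c : G.ConnectedComponent, HasDistinctEndpoints (componentEdgeSet c)) :
    HasDistinctEndpoints G.edgeSet := by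
  choose f f_inj hf using h
  refine .of_rel (fun e i => ∃ c, ∃ he : e ∈ componentEdgeSet c, f c ⟨e, he⟩ = i)
    (fun e he => ?_) ?_
  · obtain ⟨c, hec⟩ := exists_mem_componentEdgeSet he
    exact ⟨_, hf c ⟨e, hec⟩, c, hec, rfl⟩
  · rintro i e - e' - ⟨c, hec, hi⟩ ⟨c', hec', hi'⟩
    have hie : i ∈ e := hi ▸ hf c ⟨e, hec⟩
    have hie' : i ∈ e' := hi' ▸ hf c' ⟨e', hec'⟩
    obtain rfl : c = c' := (hec.2 i hie).symm.trans (hec'.2 i hie')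
    exact congrArg Subtype.val (f_inj c (hi.trans hi'.symm))

theorem hasDistinctEndpoints_edgeSet_iff
    (hfin : ∀ c : G.ConnectedComponent, (componentEdgeSet c).Finite) :
    HasDistinctEndpoints G.edgeSet ↔
      ∀ c : G.ConnectedComponent, (componentEdgeSet c).ncard ≤ c.supp.ncard := by
  refine ⟨fun h c => ?_, fun h => hasDistinctEndpoints_edgeSet fun c =>
    hasDistinctEndpoints_componentEdgeSet (hfin c) (h c)⟩
  exact (h.mono (componentEdgeSet_subset c)).ncard_le
    (finite_supp_of_finite_componentEdgeSet (hfin c)) fun e he => he.2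

end Components

section Orientations

variable {α : Type*} {M : Finset (Sym2 α)} {X : α → Finset (Sym2 α)}

lemma notMem_of_mem_bundle (hloop : ∀ e ∈ M, ¬ e.IsDiag) (hX : IsAllocation M X)
    (hXo : IsOrientation X) {i j : α} (hi : s(i, j) ∈ X i) : ∀ e ∈ X j, i ∉ e := by
  intro e he hie
  have hij : i ≠ j := fun h => hloop _ (hX.1 i hi) (Sym2.mk_isDiag_iff.2 h)
  obtain rfl := (Sym2.mem_and_mem_iff hij).1 ⟨hie, hXo j e he⟩
  exact hij ((hX.2 _ (hX.1 i hi)).unique hi he)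

lemma HasDistinctEndpoints.exists_orientation (hM : HasDistinctEndpoints (M : Set (Sym2 α))) :
    ∃ X, IsAllocation M X ∧ IsOrientation X ∧ ∀ i, (X i : Set (Sym2 α)).Subsingleton := by
  classical
  obtain ⟨f, f_inj, hf⟩ := hM
  let X (i : α) : Finset (Sym2 α) := {e ∈ M | ∃ he : e ∈ M, f ⟨e, he⟩ = i}
  have mem_X {i : α} {e : Sym2 α} : e ∈ X i ↔ ∃ he : e ∈ M, f ⟨e, he⟩ = i := by
    simp only [X, mem_filter]
    exact and_iff_right_of_imp fun ⟨he, _⟩ => he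
  refine ⟨X, ⟨fun i => filter_subset _ _, fun e he => ⟨f ⟨e, he⟩, mem_X.2 ⟨he, rfl⟩, ?_⟩⟩, ?_, ?_⟩
  · intro i hi
    exact (mem_X.1 hi).2.symm
  · intro i e hei
    obtain ⟨he, rfl⟩ := mem_X.1 hei
    exact hf ⟨e, he⟩
  · intro i e he e' he'
    obtain ⟨_, hi⟩ := mem_X.1 he
    obtain ⟨_, hi'⟩ := mem_X.1 he'
    exact congrArg Subtype.val (f_inj (hi.trans hi'.symm))

end Orientations

section Valuations

variable {w : Finset (Sym2 V) → ℝ} {M S : Finset (Sym2 V)} {e : Sym2 V}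

lemma value_rel_value_empty (r : ℝ → ℝ → Prop) [Std.Refl r] [IsTrans ℝ r] (hS : S ⊆ M)
    (h : ∀ e ∈ S, ∀ T ⊆ M.erase e, r (w (insert e T)) (w T)) : r (w S) (w ∅) := by
  induction S using Finset.induction_on with
  | empty => exact refl _
  | insert e T he ih =>
    have hTM : T ⊆ M := (subset_insert e T).trans hS
    have hstep : r (w (insert e T)) (w T) :=
      h e (mem_insert_self e T) T (subset_erase.2 ⟨hTM, he⟩)
    exact _root_.trans hstep (ih hTM fun e' he' => h e' (mem_insert_of_mem he'))

lemma value_eq_value_empty (hS : S ⊆ M) (h : ∀ e ∈ S, IsDummyFor w M e) : w S = w ∅ :=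
  value_rel_value_empty (· = ·) hS h

lemma value_le_value_empty (hS : S ⊆ M) (h : ∀ e ∈ S, IsChoreFor w M e ∨ IsDummyFor w M e) :
    w S ≤ w ∅ :=
  value_rel_value_empty (· ≤ ·) hS fun e he T hT =>
    (h e he).elim (fun hc => (hc T hT).le) fun hd => (hd T hT).le

lemma IsChoreFor.value_lt_value_erase (h : IsChoreFor w M e) (hS : S ⊆ M) (he : e ∈ S) :
    w S < w (S.erase e) := by
  simpa only [insert_erase he] using h (S.erase e) (erase_subset_erase e hS)

end Valuations

section EFX

variable {M : Finset (Sym2 V)} {v : V → Finset (Sym2 V) → ℝ} {X : V → Finset (Sym2 V)}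

lemma CondOwnStrict.eq_of_mem_bundle (hXc : CondOwnStrict v X) (hloop : ∀ e ∈ M, ¬ e.IsDiag)
    (hchore : ∀ e ∈ M, ∀ i ∈ e, IsChoreFor (v i) M e)
    (hdummy : ∀ i, ∀ e ∈ M, i ∉ e → IsDummyFor (v i) M e)
    (hX : IsAllocation M X) (hXo : IsOrientation X) {i : V} {e e' : Sym2 V}
    (he : e ∈ X i) (he' : e' ∈ X i) : e = e' := by
  by_contra hne
  obtain ⟨j, rfl⟩ := Sym2.mem_iff_exists.1 (hXo i e he)
  have chore_of_mem : ∀ d ∈ X i, IsChoreFor (v i) M d := fun d hd =>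
    hchore d (hX.1 i hd) i (hXo i d hd)
  have hsub : (X i).erase s(i, j) ⊆ M := (erase_subset _ _).trans (hX.1 i)
  have hXj : v i (X j) = v i ∅ := value_eq_value_empty (hX.1 j) fun d hd =>
    hdummy i d (hX.1 j hd) (notMem_of_mem_bundle hloop hX hXo he d hd)
  have herase : v i (X i) < v i ((X i).erase s(i, j)) :=
    (chore_of_mem _ he).value_lt_value_erase (hX.1 i) he
  have hlt : v i ((X i).erase s(i, j)) < v i (X j) :=
    calc v i ((X i).erase s(i, j))
        < v i (((X i).erase s(i, j)).erase e') :=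
          (chore_of_mem e' he').value_lt_value_erase hsub (mem_erase.2 ⟨Ne.symm hne, he'⟩)
      _ ≤ v i ∅ := value_le_value_empty ((erase_subset _ _).trans hsub) fun d hd =>
          .inl (chore_of_mem d (mem_of_mem_erase (mem_of_mem_erase hd)))
      _ = v i (X j) := hXj.symm
  exact (hXc i j (herase.trans hlt) _ he herase).not_gt hlt

lemma condOwnStrict_of_subsingleton (hXM : ∀ i, X i ⊆ M)
    (hv : ∀ i, ∀ e ∈ M, IsChoreFor (v i) M e ∨ IsDummyFor (v i) M e)
    (hX : ∀ i, (X i : Set (Sym2 V)).Subsingleton) : CondOwnStrict v X := by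
  intro i j _ e he _
  have hempty : (X i).erase e = ∅ := by
    rw [erase_eq_empty_iff]
    exact .inr (coe_injective (by simpa using (hX i).eq_singleton_of_mem he))
  rw [hempty]
  exact value_le_value_empty (hXM j) fun d hd => hv i d (hXM j hd)

theorem exists_condOwnStrict_orientation_iff (hloop : ∀ e ∈ M, ¬ e.IsDiag)
    (hchore : ∀ e ∈ M, ∀ i ∈ e, IsChoreFor (v i) M e)
    (hdummy : ∀ i, ∀ e ∈ M, i ∉ e → IsDummyFor (v i) M e) :
    (∃ X, IsAllocation M X ∧ IsOrientation X ∧ CondOwnStrict v X) ↔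
      HasDistinctEndpoints (M : Set (Sym2 V)) := by
  constructor
  · rintro ⟨X, hX, hXo, hXc⟩
    refine .of_rel (fun e i => e ∈ X i) (fun e he => ?_) fun i e _ e' _ hei hei' =>
      hXc.eq_of_mem_bundle hloop hchore hdummy hX hXo hei hei'
    obtain ⟨i, hi⟩ := (hX.2 e he).exists
    exact ⟨i, hXo i e hi, hi⟩
  · intro hM
    obtain ⟨X, hX, hXo, hXs⟩ := hM.exists_orientation
    exact ⟨X, hX, hXo, condOwnStrict_of_subsingleton hX.1
      (fun i e he => (em (i ∈ e)).imp (hchore e he i) (hdummy i e he)) hXs⟩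

end EFX

theorem stmt3_general {V : Type*} [DecidableEq V] (G : SimpleGraph V) [Fintype G.edgeSet]
    (v : V → Finset (Sym2 V) → ℝ)
    (hdummy : ∀ i, ∀ e ∈ G.edgeFinset, i ∉ e → IsDummyFor (v i) G.edgeFinset e)
    (hchore : ∀ e ∈ G.edgeFinset, ∀ i ∈ e, IsChoreFor (v i) G.edgeFinset e) :
    (∃ X : V → Finset (Sym2 V),
        IsAllocation G.edgeFinset X ∧ IsOrientation X ∧ CondOwnStrict v X) ↔
    (∀ c : G.ConnectedComponent,
        {e : Sym2 V | e ∈ G.edgeSet ∧ ∀ x ∈ e, G.connectedComponentMk x = c}.ncard ≤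
        {x : V | G.connectedComponentMk x = c}.ncard) := by
  have hloop : ∀ e ∈ G.edgeFinset, ¬ e.IsDiag := fun e he =>
    G.not_isDiag_of_mem_edgeSet (SimpleGraph.mem_edgeFinset.1 he)
  rw [exists_condOwnStrict_orientation_iff hloop hchore hdummy, SimpleGraph.coe_edgeFinset]
  exact hasDistinctEndpoints_edgeSet_iff fun c =>
    G.edgeSet.toFinite.subset (componentEdgeSet_subset c)

/-- For a chores instance on a simple graph in which every edge is a
chore for both of its endpoint agents, an EFX₋ orientation exists iff every connected
component of the graph has at most as many edges as vertices. -/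
theorem stmt3 {V : Type*} [Fintype V] [DecidableEq V]
    (G : SimpleGraph V) [DecidableRel G.Adj]
    (v : V → Finset (Sym2 V) → ℝ)
    (hvalid : ValidInstance G.edgeFinset v)
    (hchore : ∀ e ∈ G.edgeFinset, ∀ i ∈ e, IsChoreFor (v i) G.edgeFinset e) :
    (∃ X : V → Finset (Sym2 V),
        IsAllocation G.edgeFinset X ∧ IsOrientation X ∧ CondOwnStrict v X) ↔
    (∀ c : G.ConnectedComponent,
        {e : Sym2 V | e ∈ G.edgeSet ∧ ∀ x ∈ e, G.connectedComponentMk x = c}.ncard ≤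
        {x : V | G.connectedComponentMk x = c}.ncard) :=
  stmt3_general G v hvalid.2.2 hchore
end

section
/- Consider a chores instance on a simple graph that admits an EFX_0 orientation. Let N' ⊊ N and let X^p = (X^p_1, …, X^p_n) be a partial orientation that is maximal with respect to N' (i.e., ⋃_{a_i ∈ N'} X^p_i = ⋃_{a_i ∈ N'} E_i, where E_i is the set of edges incident to a_i) and in which every agent in N \ N' receives an empty bundle. If X^p satisfies the condition that for every agent a_i, either X^p_i contains a chore for a_i and |X^p_i| = 1, or every edge in X^p_i is a dummy for a_i, then X^p is implementable: there exists an EFX_0 orientation X = (X_1, …, X_n) with X^p_i ⊆ X_i for every agent a_i. -/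
open Finset

variable {V : Type*} [DecidableEq V]

/-- A partial orientation: pairwise disjoint bundles of edges of `M`, each allocated
edge going to one of its endpoint agents. -/
def IsPartialOrientation (M : Finset (Sym2 V)) (X : V → Finset (Sym2 V)) : Prop :=
  (∀ i, X i ⊆ M) ∧ (∀ i j, i ≠ j → Disjoint (X i) (X j)) ∧ ∀ i, ∀ e ∈ X i, i ∈ e

/-!
In a chores instance, an orientation is EFX₀ exactly when every bundle is a single chore or consists
of dummies: an agent with a chore `e` and another edge values the bundle of the other endpoint of
`e` like the empty one, and still envies it after giving up the other edge. This shape passes to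
sub-bundles. So let the edges that `Xp` leaves unallocated go as in a given EFX₀ orientation `Y`:
an agent in `N'` receives nothing new, since all her incident edges are already allocated, and an
agent outside `N'` ends up with part of her bundle in `Y`.
-/

section Valuation

variable {w : Finset (Sym2 V) → ℝ} {M S : Finset (Sym2 V)}

theorem antitoneOn_of_forall_chore_or_dummy
    (hw : ∀ e ∈ M, IsChoreFor w M e ∨ IsDummyFor w M e) : AntitoneOn w (Set.Iic M) := by
  have anti_inter : Antitone fun S => w (S ∩ M) := by
    refine antitone_iff_forall_insert_le.2 fun S e he => ?_
    by_cases heM : e ∈ M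
    · have hS : S ∩ M ⊆ M.erase e :=
        subset_erase.2 ⟨inter_subset_right, fun h => he (mem_of_mem_inter_left h)⟩
      rw [insert_inter_of_mem heM]
      exact (hw e heM).elim (fun h => (h _ hS).le) fun h => (h _ hS).le
    · rw [insert_inter_of_notMem heM]
  intro S hS T hT hST
  simpa only [inter_eq_left.2 hS, inter_eq_left.2 hT] using anti_inter hST

theorem value_eq_empty_of_forall_dummy (hS : S ⊆ M) (hdummy : ∀ e ∈ S, IsDummyFor w M e) :
    w S = w ∅ := by
  induction S using Finset.induction_on with
  | empty => rfl
  | insert e S he ih =>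
    obtain ⟨⟨_, hSM⟩, hde, hdS⟩ := insert_subset_iff.1 hS, forall_mem_insert _ _ _ |>.1 hdummy
    rw [hde S (subset_erase.2 ⟨hSM, he⟩), ih hSM hdS]

theorem value_lt_empty_of_chore_mem (hw : AntitoneOn w (Set.Iic M)) (hS : S ⊆ M) {e : Sym2 V}
    (he : e ∈ S) (hchore : IsChoreFor w M e) : w S < w ∅ :=
  calc
    w S ≤ w {e} := hw (singleton_subset_iff.2 (hS he)) hS (singleton_subset_iff.2 he)
    _ < w ∅ := hchore ∅ (empty_subset _)

/-- The shape of a bundle that characterizes EFX₀ orientations of chores instances: either the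
bundle is a single chore, or it consists of dummies (in particular, it may be empty). -/
def IsLoneChoreOrDummies (w : Finset (Sym2 V) → ℝ) (M S : Finset (Sym2 V)) : Prop :=
  ((∃ e ∈ S, IsChoreFor w M e) ∧ S.card = 1) ∨ ∀ e ∈ S, IsDummyFor w M e

theorem IsLoneChoreOrDummies.mono {T : Finset (Sym2 V)} (hT : IsLoneChoreOrDummies w M T)
    (hST : S ⊆ T) : IsLoneChoreOrDummies w M S := by
  rcases hT with ⟨hchore, hcard⟩ | hdummy
  · obtain ⟨e, rfl⟩ := card_eq_one.1 hcard
    rcases subset_singleton_iff.1 hST with rfl | rfl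
    · exact .inr fun e he => absurd he (notMem_empty e)
    · exact .inl ⟨hchore, hcard⟩
  · exact .inr fun e he => hdummy e (hST he)

end Valuation

section EFX

variable {M : Finset (Sym2 V)} {v : V → Finset (Sym2 V) → ℝ} {X : V → Finset (Sym2 V)}

theorem condOwnWeak_of_forall_isLoneChoreOrDummies (hv : ∀ i, AntitoneOn (v i) (Set.Iic M))
    (hX : ∀ i, X i ⊆ M) (hshape : ∀ i, IsLoneChoreOrDummies (v i) M (X i)) :
    CondOwnWeak v X := by
  intro i j henvy e he _
  have le_empty : v i (X j) ≤ v i ∅ := hv i (empty_subset M) (hX j) (empty_subset _)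
  rcases hshape i with ⟨_, hcard⟩ | hdummy
  · have erase_eq : (X i).erase e = ∅ := by
      rw [← card_eq_zero, card_erase_of_mem he, hcard]
    rwa [erase_eq]
  · have eq_empty : v i (X i) = v i ∅ := value_eq_empty_of_forall_dummy (hX i) hdummy
    exact absurd henvy (le_empty.trans eq_empty.ge).not_gt

/-- The witness is the other endpoint of `e`: since the graph is simple, `e` is the only edge
relevant to `i` that this agent could hold. -/
theorem exists_value_eq_empty_of_mem (hvalid : ValidInstance M v) (hX : IsAllocation M X)
    (hori : IsOrientation X) {i : V} {e : Sym2 V} (he : e ∈ X i) :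
    ∃ k, v i (X k) = v i ∅ := by
  obtain ⟨k, rfl⟩ := Sym2.mem_iff_exists.1 (hori i e he)
  have heM : s(i, k) ∈ M := hX.1 i he
  have hik : i ≠ k := fun h => hvalid.1 _ heM (Sym2.mk_isDiag_iff.2 h)
  refine ⟨k, value_eq_empty_of_forall_dummy (hX.1 k) fun f hf => ?_⟩
  refine hvalid.2.2 i f (hX.1 k hf) fun hif => hik ?_
  obtain rfl : f = s(i, k) := (Sym2.mem_and_mem_iff hik).1 ⟨hif, hori k f hf⟩
  exact (hX.2 _ heM).unique he hf

theorem CondOwnWeak.isLoneChoreOrDummies (hefx : CondOwnWeak v X) (hvalid : ValidInstance M v)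
    (hchores : ∀ i, ∀ e ∈ M, IsChoreFor (v i) M e ∨ IsDummyFor (v i) M e)
    (hX : IsAllocation M X) (hori : IsOrientation X) (i : V) :
    IsLoneChoreOrDummies (v i) M (X i) := by
  by_cases hdummy : ∀ e ∈ X i, IsDummyFor (v i) M e
  · exact .inr hdummy
  push Not at hdummy
  obtain ⟨e, he, hndummy⟩ := hdummy
  have hchore : IsChoreFor (v i) M e := (hchores i e (hX.1 i he)).resolve_right hndummy
  refine .inl ⟨⟨e, he, hchore⟩, card_eq_one.2 ⟨e, eq_singleton_iff_unique_mem.2 ⟨he, ?_⟩⟩⟩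
  intro f hf
  by_contra hfe
  have anti : AntitoneOn (v i) (Set.Iic M) := antitoneOn_of_forall_chore_or_dummy (hchores i)
  have erase_subset_M : (X i).erase f ⊆ M := (erase_subset f _).trans (hX.1 i)
  obtain ⟨k, hk⟩ := exists_value_eq_empty_of_mem hvalid hX hori he
  have envies : Envies v X i k :=
    (value_lt_empty_of_chore_mem anti (hX.1 i) he hchore).trans_eq hk.symm
  have still_envies : v i ((X i).erase f) < v i (X k) :=
    (value_lt_empty_of_chore_mem anti erase_subset_M (mem_erase_of_ne_of_mem (Ne.symm hfe) he)
      hchore).trans_eq hk.symm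
  exact still_envies.not_ge
    (hefx i k envies f hf (anti erase_subset_M (hX.1 i) (erase_subset f _)))

end EFX

section Completion

variable {M : Finset (Sym2 V)} {Xp Y : V → Finset (Sym2 V)}

open Classical in
/-- The completion of a partial orientation `Xp` by an orientation `Y`: the edges left
unallocated by `Xp` are allocated as in `Y`. -/
noncomputable def completion (Xp Y : V → Finset (Sym2 V)) (i : V) : Finset (Sym2 V) :=
  Xp i ∪ {e ∈ Y i | ∀ j, e ∉ Xp j}

theorem mem_completion {i : V} {e : Sym2 V} :
    e ∈ completion Xp Y i ↔ e ∈ Xp i ∨ e ∈ Y i ∧ ∀ j, e ∉ Xp j := by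
  simp only [completion, mem_union, mem_filter]

theorem subset_completion (i : V) : Xp i ⊆ completion Xp Y i :=
  subset_union_left

theorem IsAllocation.completion (hY : IsAllocation M Y) (hsub : ∀ i, Xp i ⊆ M)
    (hdisj : ∀ i j, i ≠ j → Disjoint (Xp i) (Xp j)) : IsAllocation M (completion Xp Y) := by
  refine ⟨fun i e he => (mem_completion.1 he).elim (hsub i ·) fun h => hY.1 i h.1,
    fun e he => ?_⟩
  simp only [mem_completion]
  by_cases halloc : ∃ k, e ∈ Xp k
  · obtain ⟨k, hk⟩ := halloc
    refine ⟨k, .inl hk, fun l hl => by_contra fun hlk => ?_⟩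
    exact disjoint_left.1 (hdisj l k hlk) (hl.resolve_right fun h => h.2 k hk) hk
  · push Not at halloc
    simpa only [halloc, false_or, not_false_eq_true, implies_true, and_true] using hY.2 e he

theorem IsOrientation.completion (hY : IsOrientation Y) (hXp : IsOrientation Xp) :
    IsOrientation (completion Xp Y) := fun i e he =>
  (mem_completion.1 he).elim (hXp i e) fun h => hY i e h.1

theorem completion_subset_of_eq_empty {i : V} (hi : Xp i = ∅) : completion Xp Y i ⊆ Y i :=
  fun e he => (mem_completion.1 he).elim (fun h => absurd h (hi ▸ notMem_empty e)) And.left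

theorem completion_eq_of_forall_mem {i : V} (hi : ∀ e ∈ Y i, ∃ j, e ∈ Xp j) :
    completion Xp Y i = Xp i := by
  refine Subset.antisymm (fun e he => ?_) (subset_completion i)
  refine (mem_completion.1 he).resolve_right fun ⟨heY, hunalloc⟩ => ?_
  obtain ⟨j, hj⟩ := hi e heY
  exact hunalloc j hj

end Completion

theorem eq_empty_or_incident_allocated_of_maximal {M : Finset (Sym2 V)} {N' : Finset V}
    {Xp : V → Finset (Sym2 V)}
    (hmax : N'.biUnion Xp = N'.biUnion (fun i => M.filter (fun e => i ∈ e)))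
    (hout : ∀ i ∉ N', Xp i = ∅) (i : V) :
    Xp i = ∅ ∨ ∀ e ∈ M, i ∈ e → ∃ j, e ∈ Xp j := by
  by_cases hi : i ∈ N'
  · refine .inr fun e he hie => ?_
    have hmem : e ∈ N'.biUnion Xp :=
      hmax ▸ mem_biUnion.2 ⟨i, hi, mem_filter.2 ⟨he, hie⟩⟩
    obtain ⟨j, _, hj⟩ := mem_biUnion.1 hmem
    exact ⟨j, hj⟩
  · exact .inl (hout i hi)

theorem stmt5_general {M : Finset (Sym2 V)} {v : V → Finset (Sym2 V) → ℝ}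
    (hvalid : ValidInstance M v)
    (hchores : ∀ i, ∀ e ∈ M, IsChoreFor (v i) M e ∨ IsDummyFor (v i) M e)
    (hexists : ∃ X, IsAllocation M X ∧ IsOrientation X ∧ CondOwnWeak v X)
    {Xp : V → Finset (Sym2 V)} (hXp : IsPartialOrientation M Xp)
    (hfull : ∀ i, Xp i = ∅ ∨ ∀ e ∈ M, i ∈ e → ∃ j, e ∈ Xp j)
    (hshape : ∀ i, IsLoneChoreOrDummies (v i) M (Xp i)) :
    ∃ X, IsAllocation M X ∧ IsOrientation X ∧ CondOwnWeak v X ∧ ∀ i, Xp i ⊆ X i := by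
  obtain ⟨Y, hY, hYori, hYefx⟩ := hexists
  obtain ⟨hsub, hdisj, hXpori⟩ := hXp
  have halloc : IsAllocation M (completion Xp Y) := hY.completion hsub hdisj
  have hanti i : AntitoneOn (v i) (Set.Iic M) := antitoneOn_of_forall_chore_or_dummy (hchores i)
  have hcompletion i : IsLoneChoreOrDummies (v i) M (completion Xp Y i) := by
    rcases hfull i with hempty | hinc
    · exact (hYefx.isLoneChoreOrDummies hvalid hchores hY hYori i).mono
        (completion_subset_of_eq_empty hempty)
    · rw [completion_eq_of_forall_mem fun e he => hinc e (hY.1 i he) (hYori i e he)]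
      exact hshape i
  exact ⟨completion Xp Y, halloc, hYori.completion hXpori,
    condOwnWeak_of_forall_isLoneChoreOrDummies hanti halloc.1 hcompletion, subset_completion⟩

/-- In a chores instance admitting an EFX₀ orientation, a maximal
partial orientation with respect to a proper subset `N'` of the agents, in which all
agents outside `N'` get empty bundles and which satisfies the characterization of
Lemma 3.5, is implementable. -/
theorem stmt5 {V : Type*} [Fintype V] [DecidableEq V]
    (M : Finset (Sym2 V)) (v : V → Finset (Sym2 V) → ℝ)
    (hvalid : ValidInstance M v)
    (hchores : ∀ (i : V), ∀ e ∈ M, IsChoreFor (v i) M e ∨ IsDummyFor (v i) M e)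
    (hexists : ∃ X : V → Finset (Sym2 V),
        IsAllocation M X ∧ IsOrientation X ∧ CondOwnWeak v X)
    (N' : Finset V) (hN' : N' ⊂ Finset.univ)
    (Xp : V → Finset (Sym2 V))
    (hXp : IsPartialOrientation M Xp)
    (hmax : N'.biUnion Xp = N'.biUnion (fun i => M.filter (fun e => i ∈ e)))
    (hout : ∀ i ∉ N', Xp i = ∅)
    (hcond : ∀ i : V,
        ((∃ e ∈ Xp i, IsChoreFor (v i) M e) ∧ (Xp i).card = 1) ∨
        (∀ e ∈ Xp i, IsDummyFor (v i) M e)) :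
    ∃ X : V → Finset (Sym2 V),
      IsAllocation M X ∧ IsOrientation X ∧ CondOwnWeak v X ∧ ∀ i, Xp i ⊆ X i :=
  stmt5_general hvalid hchores hexists hXp
    (eq_empty_or_incident_allocated_of_maximal hmax hout) hcond
end

section
/- Consider the instance on the path with three agents a_1, a_2, a_3 and two edges e_{1,2} = (a_1, a_2) and e_{2,3} = (a_2, a_3), with additive valuations given by v_1(e_{1,2}) = v_2(e_{1,2}) = 1, v_2(e_{2,3}) = v_3(e_{2,3}) = -1, and value 0 on all non-incident edges (so e_{1,2} is a good for both its endpoints and e_{2,3} is a chore for both its endpoints). Then no orientation of this graph is EFX^0_-, and hence no orientation is EFX^0_0. -/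
open Finset

variable {V : Type*} [DecidableEq V]

/-- The edge set of the path `a₁ — a₂ — a₃`. -/
def pathEdges : Finset (Sym2 (Fin 3)) := {s(0, 1), s(1, 2)}

/-
The condition on the envied bundle already fails on its own. An agent holding nothing but the chore
would rather hold nothing, so she still envies the holder of the good after the good is removed.
Hence one agent holds both edges. Then the endpoint of the good that is not an endpoint of the chore
holds nothing, and still envies that agent once the chore, worthless to this endpoint, is removed.
-/

section Additive

variable {u : Finset (Sym2 V) → ℝ} {w : Sym2 V → ℝ} {M : Finset (Sym2 V)} {e : Sym2 V}

theorem insert_eq_add_of_additive (hu : ∀ S, u S = ∑ e ∈ S, w e) {S : Finset (Sym2 V)}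
    (hS : S ⊆ M.erase e) : u (insert e S) = w e + u S := by
  have heS : e ∉ S := fun he => notMem_erase e M (hS he)
  rw [hu, hu, sum_insert heS]

theorem isGoodFor_of_additive (hu : ∀ S, u S = ∑ e ∈ S, w e) (he : 0 < w e) :
    IsGoodFor u M e := fun S hS => by
  rw [insert_eq_add_of_additive hu hS]
  exact lt_add_of_pos_left _ he

theorem isChoreFor_of_additive (hu : ∀ S, u S = ∑ e ∈ S, w e) (he : w e < 0) :
    IsChoreFor u M e := fun S hS => by
  rw [insert_eq_add_of_additive hu hS]
  exact add_lt_of_neg_left _ he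

theorem isDummyFor_of_additive (hu : ∀ S, u S = ∑ e ∈ S, w e) (he : w e = 0) :
    IsDummyFor u M e := fun S hS => by
  rw [insert_eq_add_of_additive hu hS, he, zero_add]

theorem isGoodFor_or_isDummyFor_of_additive (hu : ∀ S, u S = ∑ e ∈ S, w e) (he : 0 ≤ w e) :
    IsGoodFor u M e ∨ IsDummyFor u M e :=
  he.lt_or_eq.imp (isGoodFor_of_additive hu) fun h => isDummyFor_of_additive hu h.symm

end Additive

section SmallBundles

variable {u : Finset (Sym2 V) → ℝ} {M : Finset (Sym2 V)} {e : Sym2 V}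

theorem IsGoodFor.empty_lt_singleton (h : IsGoodFor u M e) : u ∅ < u {e} :=
  h ∅ (empty_subset _)

theorem IsChoreFor.singleton_lt_empty (h : IsChoreFor u M e) : u {e} < u ∅ :=
  h ∅ (empty_subset _)

theorem IsDummyFor.singleton_eq_empty (h : IsDummyFor u M e) : u {e} = u ∅ :=
  h ∅ (empty_subset _)

theorem IsDummyFor.pair_eq_singleton {f : Sym2 V} (h : IsDummyFor u M f) (he : e ∈ M)
    (hef : e ≠ f) : u {e, f} = u {e} := by
  rw [pair_comm]
  exact h {e} (singleton_subset_iff.2 (mem_erase.2 ⟨hef, he⟩))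

end SmallBundles

namespace IsAllocation

variable {M : Finset (Sym2 V)} {X : V → Finset (Sym2 V)} {e f : Sym2 V} {i p q : V}

omit [DecidableEq V] in
theorem eq_of_mem_of_mem_s7 (hX : IsAllocation M X) (hp : e ∈ X p) (hq : e ∈ X q) : p = q :=
  (hX.2 e (hX.1 p hp)).unique hp hq

omit [DecidableEq V] in
theorem eq_empty_of_eq_of_ne (hX : IsAllocation M X) (hp : X p = M) (hi : i ≠ p) : X i = ∅ :=
  eq_empty_of_forall_notMem fun _ he => hi (hX.eq_of_mem_of_mem_s7 he (hp ▸ hX.1 i he))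

theorem eq_pair (hX : IsAllocation {e, f} X) (he : e ∈ X p) (hf : f ∈ X p) : X p = {e, f} :=
  (hX.1 p).antisymm (insert_subset he (singleton_subset_iff.2 hf))

theorem eq_singleton_left (hX : IsAllocation {e, f} X) (he : e ∈ X p) (hf : f ∉ X p) :
    X p = {e} := by
  refine eq_singleton_iff_unique_mem.2 ⟨he, fun g hg => ?_⟩
  have hgf : g ≠ f := ne_of_mem_of_not_mem hg hf
  simpa only [mem_insert, mem_singleton, hgf, or_false] using hX.1 p hg

theorem eq_singleton_right (hX : IsAllocation {e, f} X) (he : e ∉ X p) (hf : f ∈ X p) :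
    X p = {f} := by
  rw [pair_comm] at hX
  exact hX.eq_singleton_left hf he

end IsAllocation

namespace CondEnviedWeak

variable {v : V → Finset (Sym2 V) → ℝ} {X : V → Finset (Sym2 V)} {e f : Sym2 V} {i p q : V}

theorem erase_le (h : CondEnviedWeak v X) (he : e ∈ X p)
    (hle : v i ((X p).erase e) ≤ v i (X p)) : v i ((X p).erase e) ≤ v i (X i) := by
  by_contra! hlt
  exact hlt.not_ge (h i p (hlt.trans_le hle) e he hle)

theorem empty_le_of_eq_singleton (h : CondEnviedWeak v X) (hp : X p = {e})
    (he : v i ∅ ≤ v i {e}) : v i ∅ ≤ v i (X i) := by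
  have hle := h.erase_le (i := i) (hp ▸ mem_singleton_self e : e ∈ X p)
  rw [hp, erase_singleton] at hle
  exact hle he

theorem eq_of_mem_of_mem_s7 (h : CondEnviedWeak v X) (hX : IsAllocation {e, f} X)
    (hp : e ∈ X p) (hq : f ∈ X q) (he : v q ∅ ≤ v q {e}) (hf : v q {f} < v q ∅) : p = q := by
  by_contra hpq
  have hXp : X p = {e} := hX.eq_singleton_left hp fun hf' => hpq (hX.eq_of_mem_of_mem_s7 hf' hq)
  have hXq : X q = {f} := hX.eq_singleton_right (fun he' => hpq (hX.eq_of_mem_of_mem_s7 hp he')) hq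
  have hle : v q ∅ ≤ v q {f} := hXq ▸ h.empty_le_of_eq_singleton hXp he
  exact hf.not_ge hle

theorem singleton_le_empty_of_eq_pair (h : CondEnviedWeak v X) (hi : X i = ∅)
    (hp : X p = {e, f}) (hef : e ≠ f) (hle : v i {e} ≤ v i {e, f}) : v i {e} ≤ v i ∅ := by
  have herase : (X p).erase f = {e} := by
    rw [hp, pair_comm, erase_insert (notMem_singleton.2 hef.symm)]
  have hf : f ∈ X p := hp ▸ mem_insert_of_mem (mem_singleton_self f)
  have hle' := h.erase_le (i := i) hf
  rw [herase, hp, hi] at hle'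
  exact hle' hle

end CondEnviedWeak

theorem stmt7_general {v : V → Finset (Sym2 V) → ℝ} {e f : Sym2 V} {a : V}
    (hchore : ∀ i ∈ f, IsChoreFor (v i) {e, f} f)
    (hnonneg : ∀ i ∈ f, IsGoodFor (v i) {e, f} e ∨ IsDummyFor (v i) {e, f} e)
    (hgood : IsGoodFor (v a) {e, f} e) (hdummy : IsDummyFor (v a) {e, f} f)
    {X : V → Finset (Sym2 V)} (hX : IsAllocation {e, f} X) (hO : IsOrientation X) :
    ¬ CondEnviedWeak v X := by
  intro h
  have haf : a ∉ f := fun ha =>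
    (hchore a ha).singleton_lt_empty.ne hdummy.singleton_eq_empty
  have hef : e ≠ f := by
    rintro rfl
    exact hgood.empty_lt_singleton.ne' hdummy.singleton_eq_empty
  obtain ⟨p, hp⟩ := (hX.2 e (mem_insert_self e {f})).exists
  obtain ⟨q, hq⟩ := (hX.2 f (mem_insert_of_mem (mem_singleton_self f))).exists
  have hqf : q ∈ f := hO q f hq
  have hqe : v q ∅ ≤ v q {e} := (hnonneg q hqf).elim
    (fun hg => hg.empty_lt_singleton.le) (fun hd => hd.singleton_eq_empty.ge)
  obtain rfl : p = q := h.eq_of_mem_of_mem_s7 hX hp hq hqe (hchore q hqf).singleton_lt_empty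
  have hXp : X p = {e, f} := hX.eq_pair hp hq
  have hXa : X a = ∅ := hX.eq_empty_of_eq_of_ne hXp fun hap => haf (hap ▸ hqf)
  have hle : v a {e} ≤ v a ∅ :=
    h.singleton_le_empty_of_eq_pair hXa hXp hef
      (hdummy.pair_eq_singleton (mem_insert_self e {f}) hef).ge
  exact hgood.empty_lt_singleton.not_ge hle

/-- On the path with three agents, where the edge `(a₁, a₂)` is worth
`1` to both of its endpoints, the edge `(a₂, a₃)` is worth `-1` to both of its
endpoints, and all non-incident edges are worth `0`, no orientation is EFX⁰₋ and
hence no orientation is EFX⁰₀. -/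
theorem stmt7 (v : Fin 3 → Finset (Sym2 (Fin 3)) → ℝ)
    (hv : ∀ (i : Fin 3) (S : Finset (Sym2 (Fin 3))),
      v i S = ∑ e ∈ S,
        (if i ∈ e then (if e = s(0, 1) then (1 : ℝ) else if e = s(1, 2) then -1 else 0)
         else 0)) :
    ∀ X : Fin 3 → Finset (Sym2 (Fin 3)),
      IsAllocation pathEdges X → IsOrientation X →
        ¬ (CondEnviedWeak v X ∧ CondOwnStrict v X) ∧
        ¬ (CondEnviedWeak v X ∧ CondOwnWeak v X) := by
  intro X hX hO
  have hE : ¬ CondEnviedWeak v X := stmt7_general (a := 0)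
    (fun i hi => isChoreFor_of_additive (hv i) (by simp [hi]))
    (fun i _ => isGoodFor_or_isDummyFor_of_additive (hv i) (by simp [apply_ite]))
    (isGoodFor_of_additive (hv 0) (by simp)) (isDummyFor_of_additive (hv 0) (by simp)) hX hO
  exact ⟨fun h => hE h.1, fun h => hE h.1⟩
end

section
/- Consider the instance on the complete graph K_4 with agents a_1, a_2, a_3, a_4 and additive valuations where edge (a_1, a_2) has value 10 to both a_1 and a_2, edge (a_3, a_4) has value 10 to both a_3 and a_4, each of the four edges (a_1, a_3), (a_1, a_4), (a_2, a_3), (a_2, a_4) has value 1 to both of its endpoint agents, and every edge has value 0 to every non-endpoint agent. Then no allocation of the six edges among the four agents is EFX^0_0. In particular, there exist goods instances on simple graphs admitting no EFX^0_0 allocation. -/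
open Finset

variable {V : Type*} [DecidableEq V]

/-- The six edges of the complete graph `K₄`. -/
def K4Edges : Finset (Sym2 (Fin 4)) :=
  {s(0, 1), s(2, 3), s(0, 2), s(0, 3), s(1, 2), s(1, 3)}

/-!
Say that a set of heavy edges matches the agents in pairs and that each endpoint of a heavy edge
prefers it to everything else together. An agent who does not own her heavy edge envies its owner,
so by EFX⁰₀ the owner holds nothing else, while she holds no dummy, hence only edges incident to
her. The owner `j` of a heavy edge is one of its endpoints: otherwise her bundle, that single edge,
contains neither her own heavy edge nor an edge incident to her. Now let `j` and `k` own two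
different heavy edges. The light edge `jk` has no possible owner: the owners of heavy edges hold
nothing else, and the remaining agents hold only edges incident to themselves.
-/

theorem isGoodFor_of_pos {u : Finset (Sym2 V) → ℝ} {w : Sym2 V → ℝ} (hu : ∀ S, u S = ∑ e ∈ S, w e)
    (M : Finset (Sym2 V)) {e : Sym2 V} (he : 0 < w e) : IsGoodFor u M e := by
  intro S hS
  rw [hu, hu, sum_insert fun h ↦ notMem_erase e M (hS h)]
  exact lt_add_of_pos_left _ he

theorem isDummyFor_of_eq_zero {u : Finset (Sym2 V) → ℝ} {w : Sym2 V → ℝ}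
    (hu : ∀ S, u S = ∑ e ∈ S, w e) (M : Finset (Sym2 V)) {e : Sym2 V} (he : w e = 0) :
    IsDummyFor u M e := by
  intro S _
  rw [hu, hu, sum_insert_zero he]

theorem isGoodFor_or_isDummyFor_of_nonneg {u : Finset (Sym2 V) → ℝ} {w : Sym2 V → ℝ}
    (hu : ∀ S, u S = ∑ e ∈ S, w e) (M : Finset (Sym2 V)) {e : Sym2 V} (he : 0 ≤ w e) :
    IsGoodFor u M e ∨ IsDummyFor u M e :=
  he.lt_or_eq.imp (isGoodFor_of_pos hu M) fun h ↦ isDummyFor_of_eq_zero hu M h.symm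

theorem monotoneOn_of_nonneg {α : Type*} {u : Finset α → ℝ} {w : α → ℝ}
    (hu : ∀ S, u S = ∑ e ∈ S, w e) {M : Finset α} (hw : ∀ e ∈ M, 0 ≤ w e) :
    MonotoneOn u (Set.Iic M) := by
  intro S _ T hT hST
  rw [hu, hu]
  exact sum_le_sum_of_subset_of_nonneg hST fun e he _ ↦ hw e (hT he)

/-- `e` is *dominant* for the valuation `u`: on its own it is worth strictly more than all other
items of `M` together. This abstracts the edges of value `10`. -/
def IsDominantFor (u : Finset (Sym2 V) → ℝ) (M : Finset (Sym2 V)) (e : Sym2 V) : Prop :=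
  u (M.erase e) < u {e}

theorem IsDominantFor.value_lt_of_notMem {u : Finset (Sym2 V) → ℝ} {M S T : Finset (Sym2 V)}
    {e : Sym2 V} (hd : IsDominantFor u M e) (hu : MonotoneOn u (Set.Iic M)) (hS : S ⊆ M)
    (hT : T ⊆ M) (heS : e ∉ S) (heT : e ∈ T) : u S < u T :=
  calc u S ≤ u (M.erase e) := hu hS (erase_subset e M) (subset_erase.2 ⟨hS, heS⟩)
    _ < u {e} := hd
    _ ≤ u T := hu (singleton_subset_iff.2 (hT heT)) hT (singleton_subset_iff.2 heT)

section EFX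

variable {M : Finset (Sym2 V)} {v : V → Finset (Sym2 V) → ℝ} {X : V → Finset (Sym2 V)} {i j : V}
  {e : Sym2 V}

theorem CondOwnWeak.not_isDummyFor_of_envies (hO : CondOwnWeak v X) (hX : X i ⊆ M)
    (henv : Envies v X i j) (he : e ∈ X i) : ¬ IsDummyFor (v i) M e := by
  intro hdummy
  have herase : v i (X i) = v i ((X i).erase e) := by
    simpa only [insert_erase he] using hdummy ((X i).erase e) (erase_subset_erase e hX)
  exact henv.not_ge (herase ▸ hO i j henv e he herase.le)

theorem CondEnviedWeak.value_erase_le (hE : CondEnviedWeak v X) (he : e ∈ X j)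
    (hle : v i ((X j).erase e) ≤ v i (X j)) : v i ((X j).erase e) ≤ v i (X i) := by
  by_cases henv : Envies v X i j
  · exact hE i j henv e he hle
  · exact hle.trans (not_lt.1 henv)

theorem CondEnviedWeak.eq_singleton_of_isDominantFor (hE : CondEnviedWeak v X)
    (hX : ∀ i, X i ⊆ M) (hv : MonotoneOn (v i) (Set.Iic M)) (hd : IsDominantFor (v i) M e)
    (hi : e ∉ X i) (hj : e ∈ X j) : X j = {e} := by
  refine eq_singleton_iff_unique_mem.2 ⟨hj, fun f hf ↦ by_contra fun hfe ↦ ?_⟩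
  have hsub : (X j).erase f ⊆ M := (erase_subset f _).trans (hX j)
  have hle : v i ((X j).erase f) ≤ v i (X i) :=
    hE.value_erase_le hf (hv hsub (hX j) (erase_subset f _))
  exact hle.not_gt
    (hd.value_lt_of_notMem hv (hX i) hsub hi (mem_erase.2 ⟨Ne.symm hfe, hj⟩))

end EFX

/-- The pairs `{i, p i}` form a perfect matching of the agents by items of `M`, each of which is
dominant for both of its endpoints. The matching is encoded by the map `p` sending an agent to
her partner. -/
structure IsDominantMatching (M : Finset (Sym2 V)) (v : V → Finset (Sym2 V) → ℝ) (p : V → V) :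
    Prop where
  involutive : Function.Involutive p
  partner_ne : ∀ i, p i ≠ i
  mem : ∀ i, s(i, p i) ∈ M
  dominant : ∀ i, IsDominantFor (v i) M s(i, p i)

namespace IsDominantMatching

variable {M : Finset (Sym2 V)} {v : V → Finset (Sym2 V) → ℝ} {p : V → V}
  {X : V → Finset (Sym2 V)} {i j : V} {e : Sym2 V}

theorem edge_eq_of_mem (hp : IsDominantMatching M v p) (hj : j ∈ s(i, p i)) :
    s(j, p j) = s(i, p i) := by
  rcases Sym2.mem_iff.1 hj with rfl | rfl
  · rfl
  · rw [hp.involutive i, Sym2.eq_swap]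

theorem mem_of_mem_bundle (hp : IsDominantMatching M v p)
    (hv : MonotoneOn (v i) (Set.Iic M)) (hdummy : ∀ e ∈ M, i ∉ e → IsDummyFor (v i) M e)
    (hX : IsAllocation M X) (hO : CondOwnWeak v X) (hi : s(i, p i) ∉ X i) (he : e ∈ X i) :
    i ∈ e := by
  obtain ⟨j, hj, -⟩ := hX.2 _ (hp.mem i)
  have henv : Envies v X i j := (hp.dominant i).value_lt_of_notMem hv (hX.1 i) (hX.1 j) hi hj
  by_contra hie
  exact hO.not_isDummyFor_of_envies (hX.1 i) henv he (hdummy e (hX.1 i he) hie)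

theorem owner_mem (hp : IsDominantMatching M v p) (hv : ∀ i, MonotoneOn (v i) (Set.Iic M))
    (hdummy : ∀ i, ∀ e ∈ M, i ∉ e → IsDummyFor (v i) M e) (hX : IsAllocation M X)
    (hE : CondEnviedWeak v X) (hO : CondOwnWeak v X) (hj : s(i, p i) ∈ X j) :
    j ∈ s(i, p i) := by
  by_cases hown : s(j, p j) ∈ X j
  · by_cases hi : s(i, p i) ∈ X i
    · rw [(hX.2 _ (hp.mem i)).unique hj hi]
      exact Sym2.mem_mk_left i (p i)
    · have hbundle : X j = {s(i, p i)} :=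
        hE.eq_singleton_of_isDominantFor hX.1 (hv i) (hp.dominant i) hi hj
      rw [hbundle, mem_singleton] at hown
      rw [← hown]
      exact Sym2.mem_mk_left j (p j)
  · exact hp.mem_of_mem_bundle (hv j) (hdummy j) hX hO hown hj

theorem exists_owner_mem (hp : IsDominantMatching M v p)
    (hv : ∀ i, MonotoneOn (v i) (Set.Iic M))
    (hdummy : ∀ i, ∀ e ∈ M, i ∉ e → IsDummyFor (v i) M e) (hX : IsAllocation M X)
    (hE : CondEnviedWeak v X) (hO : CondOwnWeak v X) (i : V) :
    ∃ j ∈ s(i, p i), s(j, p j) ∈ X j := by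
  obtain ⟨j, hj, -⟩ := hX.2 _ (hp.mem i)
  have hji : j ∈ s(i, p i) := hp.owner_mem hv hdummy hX hE hO hj
  exact ⟨j, hji, by rwa [hp.edge_eq_of_mem hji]⟩

theorem bundle_eq_singleton (hp : IsDominantMatching M v p)
    (hv : ∀ i, MonotoneOn (v i) (Set.Iic M)) (hX : IsAllocation M X) (hE : CondEnviedWeak v X)
    (hj : s(j, p j) ∈ X j) : X j = {s(j, p j)} := by
  have hedge : s(p j, p (p j)) = s(j, p j) := hp.edge_eq_of_mem (Sym2.mem_mk_right j (p j))
  have hpartner : s(j, p j) ∉ X (p j) := fun h ↦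
    hp.partner_ne j ((hX.2 _ (hp.mem j)).unique h hj)
  exact hE.eq_singleton_of_isDominantFor hX.1 (hv (p j)) (hedge ▸ hp.dominant (p j)) hpartner hj

end IsDominantMatching

theorem stmt9_general {M : Finset (Sym2 V)} {v : V → Finset (Sym2 V) → ℝ} {p : V → V}
    (hp : IsDominantMatching M v p) (hv : ∀ i, MonotoneOn (v i) (Set.Iic M))
    (hdummy : ∀ i, ∀ e ∈ M, i ∉ e → IsDummyFor (v i) M e) {a b : V} (hab : b ∉ s(a, p a))
    (hcross : ∀ j ∈ s(a, p a), ∀ k ∈ s(b, p b), s(j, k) ∈ M) {X : V → Finset (Sym2 V)}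
    (hX : IsAllocation M X) : ¬ (CondEnviedWeak v X ∧ CondOwnWeak v X) := by
  rintro ⟨hE, hO⟩
  obtain ⟨j, hja, hj⟩ := hp.exists_owner_mem hv hdummy hX hE hO a
  obtain ⟨k, hkb, hk⟩ := hp.exists_owner_mem hv hdummy hX hE hO b
  have hka : k ∉ s(a, p a) := fun hka ↦ hab <| by
    rw [← hp.edge_eq_of_mem hka, hp.edge_eq_of_mem hkb]
    exact Sym2.mem_mk_left b (p b)
  obtain ⟨l, hl, -⟩ := hX.2 _ (hcross j hja k hkb)
  have hlown : s(l, p l) ∈ X l := by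
    by_contra hlown
    have hljk : l ∈ s(j, k) := hp.mem_of_mem_bundle (hv l) (hdummy l) hX hO hlown hl
    rcases Sym2.mem_iff.1 hljk with rfl | rfl
    exacts [hlown hj, hlown hk]
  have hjk : s(j, k) = s(l, p l) := mem_singleton.1 (hp.bundle_eq_singleton hv hX hE hlown ▸ hl)
  have hedge : s(j, p j) = s(j, k) := by
    rw [hjk]
    exact hp.edge_eq_of_mem (hjk ▸ Sym2.mem_mk_left j k)
  apply hka
  rw [← hp.edge_eq_of_mem hja, hedge]
  exact Sym2.mem_mk_right j k

section K4

/-- The value of the edge `e` for the agent `i` in the counterexample on `K₄`. -/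
noncomputable def k4Weight (i : Fin 4) (e : Sym2 (Fin 4)) : ℝ :=
  if i ∈ e then (if e = s(0, 1) ∨ e = s(2, 3) then 10 else if e ∈ K4Edges then 1 else 0) else 0

/-- The other endpoint of the edge of value `10` at a given agent of `K₄`. -/
def k4Partner : Fin 4 → Fin 4 := ![1, 0, 3, 2]

theorem k4Weight_nonneg (i : Fin 4) (e : Sym2 (Fin 4)) : 0 ≤ k4Weight i e := by
  unfold k4Weight
  split_ifs <;> norm_num

theorem k4Weight_of_notMem {i : Fin 4} {e : Sym2 (Fin 4)} (hi : i ∉ e) : k4Weight i e = 0 :=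
  if_neg hi

theorem eq_mk_k4Partner_iff : ∀ {i : Fin 4} {e : Sym2 (Fin 4)}, i ∈ e →
    (e = s(i, k4Partner i) ↔ e = s(0, 1) ∨ e = s(2, 3)) := by
  decide

theorem k4Weight_k4Partner (i : Fin 4) : k4Weight i s(i, k4Partner i) = 10 := by
  have hi : i ∈ s(i, k4Partner i) := Sym2.mem_mk_left i (k4Partner i)
  rw [k4Weight, if_pos hi, if_pos ((eq_mk_k4Partner_iff hi).1 rfl)]

theorem k4Weight_le_one {i : Fin 4} {e : Sym2 (Fin 4)} (he : e ≠ s(i, k4Partner i)) :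
    k4Weight i e ≤ 1 := by
  by_cases hi : i ∈ e
  · rw [k4Weight, if_pos hi, if_neg (mt (eq_mk_k4Partner_iff hi).2 he)]
    split_ifs <;> norm_num
  · exact (k4Weight_of_notMem hi).trans_le zero_le_one

variable {v : Fin 4 → Finset (Sym2 (Fin 4)) → ℝ}

theorem isDominantMatching_k4Partner (hv : ∀ i S, v i S = ∑ e ∈ S, k4Weight i e) :
    IsDominantMatching K4Edges v k4Partner where
  involutive i := by revert i; decide
  partner_ne := by decide
  mem := by decide
  dominant i := by
    have hcard : #(K4Edges.erase s(i, k4Partner i)) = 5 := by revert i; decide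
    calc v i (K4Edges.erase s(i, k4Partner i))
        = ∑ e ∈ K4Edges.erase s(i, k4Partner i), k4Weight i e := hv i _
      _ ≤ #(K4Edges.erase s(i, k4Partner i)) • (1 : ℝ) :=
          sum_le_card_nsmul _ _ _ fun e he ↦ k4Weight_le_one (ne_of_mem_erase he)
      _ = 5 := by norm_num [hcard]
      _ < 10 := by norm_num
      _ = v i {s(i, k4Partner i)} := by rw [hv, sum_singleton, k4Weight_k4Partner]

theorem not_efx_k4 (hv : ∀ i S, v i S = ∑ e ∈ S, k4Weight i e) (X : Fin 4 → Finset (Sym2 (Fin 4)))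
    (hX : IsAllocation K4Edges X) : ¬ (CondEnviedWeak v X ∧ CondOwnWeak v X) :=
  stmt9_general (a := 0) (b := 2) (isDominantMatching_k4Partner hv)
    (fun i ↦ monotoneOn_of_nonneg (hv i) fun e _ ↦ k4Weight_nonneg i e)
    (fun i _ _ hi ↦ isDummyFor_of_eq_zero (hv i) K4Edges (k4Weight_of_notMem hi))
    (by decide) (by decide) hX

end K4

/-- On `K₄` with additive valuations where `(a₁,a₂)` and `(a₃,a₄)`
are worth `10` to both of their endpoints, the four remaining edges are worth `1` to
both of their endpoints, and every edge is worth `0` to non-endpoints, no allocation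
is EFX⁰₀. In particular there are goods instances admitting no EFX⁰₀ allocation. -/
theorem stmt9 (v : Fin 4 → Finset (Sym2 (Fin 4)) → ℝ)
    (hv : ∀ (i : Fin 4) (S : Finset (Sym2 (Fin 4))),
      v i S = ∑ e ∈ S,
        (if i ∈ e then
          (if e = s(0, 1) ∨ e = s(2, 3) then (10 : ℝ)
           else if e ∈ K4Edges then 1 else 0)
         else 0)) :
    (∀ X : Fin 4 → Finset (Sym2 (Fin 4)),
        IsAllocation K4Edges X → ¬ (CondEnviedWeak v X ∧ CondOwnWeak v X)) ∧
    (∃ (n : ℕ) (M : Finset (Sym2 (Fin n))) (w : Fin n → Finset (Sym2 (Fin n)) → ℝ),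
        ValidInstance M w ∧
        (∀ (i : Fin n), ∀ e ∈ M, IsGoodFor (w i) M e ∨ IsDummyFor (w i) M e) ∧
        ∀ X : Fin n → Finset (Sym2 (Fin n)),
          IsAllocation M X → ¬ (CondEnviedWeak w X ∧ CondOwnWeak w X)) := by
  have hno := not_efx_k4 hv
  have hgood : ∀ i, ∀ e ∈ K4Edges, IsGoodFor (v i) K4Edges e ∨ IsDummyFor (v i) K4Edges e :=
    fun i e _ ↦ isGoodFor_or_isDummyFor_of_nonneg (hv i) K4Edges (k4Weight_nonneg i e)
  have hvalid : ValidInstance K4Edges v :=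
    ⟨by decide, fun i e he ↦ (hgood i e he).imp_right Or.inr,
      fun i _ _ hi ↦ isDummyFor_of_eq_zero (hv i) K4Edges (k4Weight_of_notMem hi)⟩
  exact ⟨hno, 4, K4Edges, v, hvalid, hgood, hno⟩
end
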